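/- Let i_s and i_e be composable input-enabled transition systems, let q_s' ∈ Q_{i_s}, q_e' ∈ Q_{i_e}, and let σ ∈ (L_{i_s∥i_e}^δ)*. Then i_s ∥ i_e ==σ==> q_s' ∥ q_e' if and only if i_s ==σ↾L_{i_s}^δ==> q_s' and i_e ==σ↾L_{i_e}^δ==> q_e'. -/

import Mathlib

/-- Labels extended with the quiescence label `δ`. -/
inductive ELabel (Lab : Type) : Type
  | lab : Lab → ELabel Lab
  | delta : ELabel Lab

namespace ELabel

/-- Membership of an extended label in `𝓛^δ = 𝓛 ∪ {δ}`. -/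
def inL {Lab : Type} (Ls : Set Lab) : ELabel Lab → Prop
  | lab ℓ => ℓ ∈ Ls
  | delta => True

end ELabel

/-- A trace lies in `(𝓛^δ)*`. -/
def TraceIn {Lab : Type} (Ls : Set Lab) (σ : List (ELabel Lab)) : Prop :=
  ∀ x ∈ σ, ELabel.inL Ls x

/-- A labelled transition system.  `T q none q'` is an internal `τ`-step,
`T q (some ℓ) q'` is a step labelled `ℓ`. -/
structure LTS (Q : Type) (Lab : Type) where
  I : Set Lab
  U : Set Lab
  T : Q → Option Lab → Q → Prop
  q0 : Q

namespace LTS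

variable {Q Lab : Type}

/-- The label set `L = I ∪ U`. -/
def L (M : LTS Q Lab) : Set Lab := M.I ∪ M.U

/-- Standing assumptions on all LTSs: countable, disjoint input/output label
sets, transitions labelled within `L`, strong convergence (no infinite
`τ`-sequences), and image-finiteness. -/
def WellFormed (M : LTS Q Lab) : Prop :=
  M.I.Countable ∧ M.U.Countable ∧ Disjoint M.I M.U ∧
  (∀ q ℓ q', M.T q (some ℓ) q' → ℓ ∈ M.L) ∧
  (¬ ∃ f : ℕ → Q, ∀ n, M.T (f n) none (f (n + 1))) ∧
  (∀ q a, {q' | M.T q a q'}.Finite)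

/-- A state is quiescent if neither an output nor `τ` is enabled in it. -/
def Quiescent (M : LTS Q Lab) (q : Q) : Prop :=
  (∀ x ∈ M.U, ∀ q', ¬ M.T q (some x) q') ∧ ∀ q', ¬ M.T q none q'

/-- A single visible step `q --x--> q'` for `x ∈ L^δ`, where the quiescence
label `δ` gives a self-loop at quiescent states. -/
def VStep (M : LTS Q Lab) (q : Q) : ELabel Lab → Q → Prop
  | .lab ℓ, q' => M.T q (some ℓ) q'
  | .delta, q' => q' = q ∧ M.Quiescent q

/-- Zero or more `τ`-steps: `q ==ε==> q'`. -/
def Eps (M : LTS Q Lab) : Q → Q → Prop :=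
  Relation.ReflTransGen fun a b => M.T a none b

/-- Weak transition `q ==σ==> q'` for `σ ∈ (L^δ)*`. -/
inductive W (M : LTS Q Lab) : Q → List (ELabel Lab) → Q → Prop
  | nil {q q' : Q} : M.Eps q q' → W M q [] q'
  | snoc {q q1 q2 q' : Q} {σ : List (ELabel Lab)} {x : ELabel Lab} :
      W M q σ q1 → M.VStep q1 x q2 → M.Eps q2 q' → W M q (σ ++ [x]) q'

/-- `X after σ`, for a set of states `X`. -/
def afterSet (M : LTS Q Lab) (X : Set Q) (σ : List (ELabel Lab)) : Set Q :=
  {q' | ∃ q ∈ X, M.W q σ q'}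

/-- `M after σ`, from the initial state. -/
def after (M : LTS Q Lab) (σ : List (ELabel Lab)) : Set Q :=
  {q' | M.W M.q0 σ q'}

/-- The predicate underlying `out(q) ⊆ U ∪ {δ}`. -/
def outLabel (M : LTS Q Lab) (q : Q) : ELabel Lab → Prop
  | .lab ℓ => ℓ ∈ M.U ∧ ∃ q', M.T q (some ℓ) q'
  | .delta => M.Quiescent q

/-- `out(q)`. -/
def outq (M : LTS Q Lab) (q : Q) : Set (ELabel Lab) :=
  {x | M.outLabel q x}

/-- `in(q) = {ℓ ∈ I | q ==ℓ==>}`. -/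
def inq (M : LTS Q Lab) (q : Q) : Set Lab :=
  {ℓ | ℓ ∈ M.I ∧ ∃ q', M.W q [ELabel.lab ℓ] q'}

/-- `out(X) = ⋃_{q ∈ X} out(q)`. -/
def outSet (M : LTS Q Lab) (X : Set Q) : Set (ELabel Lab) :=
  ⋃ q ∈ X, M.outq q

/-- `in(X) = ⋂_{q ∈ X} in(q)`. -/
def inSet (M : LTS Q Lab) (X : Set Q) : Set Lab :=
  ⋂ q ∈ X, M.inq q

/-- Input-enabledness: `M` is an IOTS. -/
def InputEnabled (M : LTS Q Lab) : Prop :=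
  ∀ q, ∀ ℓ ∈ M.I, ∃ q', M.W q [ELabel.lab ℓ] q'

/-- `Utraces(M)`. -/
def Utraces (M : LTS Q Lab) : Set (List (ELabel Lab)) :=
  {σ | TraceIn M.L σ ∧ (∃ q', M.W M.q0 σ q') ∧
    ∀ σ1 ℓ σ2, σ = σ1 ++ ELabel.lab ℓ :: σ2 → ℓ ∈ M.I →
      ∀ q, M.W M.q0 σ1 q → ∃ q', M.W q [ELabel.lab ℓ] q'}

/-- An LTS is utrace-closed when every trace over `(L^δ)*` that it can
perform is a utrace. -/
def UtraceClosed (M : LTS Q Lab) : Prop :=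
  ∀ σ : List (ELabel Lab), TraceIn M.L σ → (∃ q', M.W M.q0 σ q') → σ ∈ M.Utraces

end LTS

/-- `i uioco s`. -/
def Uioco {Qi Qs Lab : Type} (i : LTS Qi Lab) (s : LTS Qs Lab) : Prop :=
  ∀ σ ∈ s.Utraces, i.outSet (i.after σ) ⊆ s.outSet (s.after σ)

/-- Composability: disjoint output label sets. -/
def Composable {Qs Qe Lab : Type} (s : LTS Qs Lab) (e : LTS Qe Lab) : Prop :=
  s.U ∩ e.U = ∅

/-- Parallel composition `s ∥ e`. -/
def par {Qs Qe Lab : Type} (s : LTS Qs Lab) (e : LTS Qe Lab) : LTS (Qs × Qe) Lab where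
  I := (s.I \ e.U) ∪ (e.I \ s.U)
  U := s.U ∪ e.U
  T := fun p a p' =>
    match a with
    | none =>
        (s.T p.1 none p'.1 ∧ p'.2 = p.2) ∨ (e.T p.2 none p'.2 ∧ p'.1 = p.1)
    | some ℓ =>
        (ℓ ∈ s.L ∧ ℓ ∉ e.L ∧ s.T p.1 (some ℓ) p'.1 ∧ p'.2 = p.2) ∨
        (ℓ ∈ e.L ∧ ℓ ∉ s.L ∧ e.T p.2 (some ℓ) p'.2 ∧ p'.1 = p.1) ∨
        (ℓ ∈ s.L ∧ ℓ ∈ e.L ∧ s.T p.1 (some ℓ) p'.1 ∧ e.T p.2 (some ℓ) p'.2)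
  q0 := (s.q0, e.q0)

/-- `s accepts e`: along utraces of `s ∥ e`, every output of `e` that is an
input of `s` is (weakly) enabled in `s`. -/
def Accepts {Qs Qe Lab : Type} (s : LTS Qs Lab) (e : LTS Qe Lab) : Prop :=
  ∀ σ ∈ (par s e).Utraces, ∀ qs qe, (par s e).W (par s e).q0 σ (qs, qe) →
    ∀ ℓ, ELabel.lab ℓ ∈ e.outq qe → ℓ ∈ s.I → ℓ ∈ s.inq qs

/-- `s mutually accepts e`. -/
def MutuallyAccepts {Qs Qe Lab : Type} (s : LTS Qs Lab) (e : LTS Qe Lab) : Prop :=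
  Accepts s e ∧ Accepts e s

/-- `R` is an ecosim for `s` and `e`. -/
def IsEcosim {Qs Qe Lab : Type} (s : LTS Qs Lab) (e : LTS Qe Lab)
    (R : Set (Set Qs × Set Qe)) : Prop :=
  (s.after [], e.after []) ∈ R ∧
  ∀ Xs Xe, (Xs, Xe) ∈ R →
    (∀ ℓ, ELabel.lab ℓ ∈ e.outSet Xe → ℓ ∈ s.I →
      ℓ ∈ s.inSet Xs ∧
        (s.afterSet Xs [ELabel.lab ℓ], e.afterSet Xe [ELabel.lab ℓ]) ∈ R) ∧
    (∀ ℓ, ELabel.lab ℓ ∈ s.outSet Xs → ℓ ∈ e.I →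
      ℓ ∈ e.inSet Xe ∧
        (s.afterSet Xs [ELabel.lab ℓ], e.afterSet Xe [ELabel.lab ℓ]) ∈ R) ∧
    (∀ ℓ, (ELabel.lab ℓ ∈ e.outSet Xe ∨ ℓ ∈ e.inSet Xe) → ℓ ∉ s.L →
      (Xs, e.afterSet Xe [ELabel.lab ℓ]) ∈ R) ∧
    (∀ ℓ, (ELabel.lab ℓ ∈ s.outSet Xs ∨ ℓ ∈ s.inSet Xs) → ℓ ∉ e.L →
      (s.afterSet Xs [ELabel.lab ℓ], Xe) ∈ R) ∧
    (∀ ℓ, ℓ ∈ s.inSet Xs → ℓ ∈ e.inSet Xe →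
      (s.afterSet Xs [ELabel.lab ℓ], e.afterSet Xe [ELabel.lab ℓ]) ∈ R) ∧
    (ELabel.delta ∈ s.outSet Xs → ELabel.delta ∈ e.outSet Xe →
      (s.afterSet Xs [ELabel.delta], e.afterSet Xe [ELabel.delta]) ∈ R)

/-- `s eco e`: there exists an ecosim for `s` and `e`. -/
def Eco {Qs Qe Lab : Type} (s : LTS Qs Lab) (e : LTS Qe Lab) : Prop :=
  ∃ R, IsEcosim s e R

/-- `R_U(s,e)`: the smallest relation closed under the given rules. -/
inductive RU {Qs Qe Lab : Type} (s : LTS Qs Lab) (e : LTS Qe Lab) :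
    Set Qs → Set Qe → Prop
  | base : RU s e (s.after []) (e.after [])
  | syncOutE {Xs : Set Qs} {Xe : Set Qe} (ℓ : Lab) :
      RU s e Xs Xe → ELabel.lab ℓ ∈ e.outSet Xe → ℓ ∈ s.I →
      RU s e (s.afterSet Xs [ELabel.lab ℓ]) (e.afterSet Xe [ELabel.lab ℓ])
  | syncOutS {Xs : Set Qs} {Xe : Set Qe} (ℓ : Lab) :
      RU s e Xs Xe → ELabel.lab ℓ ∈ s.outSet Xs → ℓ ∈ e.I →
      RU s e (s.afterSet Xs [ELabel.lab ℓ]) (e.afterSet Xe [ELabel.lab ℓ])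
  | internalE {Xs : Set Qs} {Xe : Set Qe} (ℓ : Lab) :
      RU s e Xs Xe → (ELabel.lab ℓ ∈ e.outSet Xe ∨ ℓ ∈ e.inSet Xe) → ℓ ∉ s.L →
      RU s e Xs (e.afterSet Xe [ELabel.lab ℓ])
  | internalS {Xs : Set Qs} {Xe : Set Qe} (ℓ : Lab) :
      RU s e Xs Xe → (ELabel.lab ℓ ∈ s.outSet Xs ∨ ℓ ∈ s.inSet Xs) → ℓ ∉ e.L →
      RU s e (s.afterSet Xs [ELabel.lab ℓ]) Xe
  | syncIn {Xs : Set Qs} {Xe : Set Qe} (ℓ : Lab) :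
      RU s e Xs Xe → ℓ ∈ s.inSet Xs → ℓ ∈ e.inSet Xe →
      RU s e (s.afterSet Xs [ELabel.lab ℓ]) (e.afterSet Xe [ELabel.lab ℓ])
  | qdelta {Xs : Set Qs} {Xe : Set Qe} :
      RU s e Xs Xe → ELabel.delta ∈ s.outSet Xs → ELabel.delta ∈ e.outSet Xe →
      RU s e (s.afterSet Xs [ELabel.delta]) (e.afterSet Xe [ELabel.delta])

open Classical in
/-- Projection `σ↾𝓛^δ` of a trace onto an (extended) label set: keeps `δ`
and the labels in `Ls`, removes all other labels. -/
noncomputable def projD {Lab : Type} (σ : List (ELabel Lab)) (Ls : Set Lab) :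
    List (ELabel Lab) :=
  σ.filter fun x => decide (ELabel.inL Ls x)

open Classical in
/-- Projection `σ↾𝓛` of a trace of plain labels onto a label set. -/
noncomputable def projL {Lab : Type} (σ : List Lab) (Ls : Set Lab) : List Lab :=
  σ.filter fun ℓ => decide (ℓ ∈ Ls)

open Classical in
/-- Substitution `σ[θ/δ]` of the label `θ` by the quiescence label `δ`. -/
noncomputable def substTheta {Lab : Type} (θ : Lab) (σ : List Lab) :
    List (ELabel Lab) :=
  σ.map fun ℓ => if ℓ = θ then ELabel.delta else ELabel.lab ℓ

/-- `⟨X⟩`: componentwise collection of a set of pairs of states. -/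
def collect {Qs Qe : Type} (X : Set (Qs × Qe)) : Set Qs × Set Qe :=
  (Prod.fst '' X, Prod.snd '' X)

/-- `q_s accepts q_e over σ`. -/
def AcceptsOver {Qs Qe Lab : Type} (s : LTS Qs Lab) (e : LTS Qe Lab)
    (qs : Qs) (qe : Qe) (σ : List (ELabel Lab)) : Prop :=
  ∀ σ1 σ2 : List (ELabel Lab), σ1 ++ σ2 = σ →
    ∀ (qs' : Qs) (qe' : Qe), (par s e).W (qs, qe) σ1 (qs', qe') →
      ∀ ℓ, ELabel.lab ℓ ∈ e.outq qe' → ℓ ∈ s.I → ℓ ∈ s.inq qs' ∧ ℓ ∈ e.U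

/-- `q_s mutually accepts q_e over σ`. -/
def MutuallyAcceptsOver {Qs Qe Lab : Type} (s : LTS Qs Lab) (e : LTS Qe Lab)
    (qs : Qs) (qe : Qe) (σ : List (ELabel Lab)) : Prop :=
  AcceptsOver s e qs qe σ ∧ AcceptsOver e s qe qs σ

/-- A test case: a quasi-finite tree-shaped LTS without `τ`-transitions, with
terminal states `pass` and `fail` carrying input self-loops, a special
quiescence-observation input `θ`, at most one output transition per state,
and receptive to all inputs other than `θ`. -/
structure TestCase (Qt Lab : Type) extends LTS Qt Lab where
  passS : Qt
  failS : Qt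
  theta : Lab
  theta_input : theta ∈ I
  no_tau : ∀ q q', ¬ T q none q'
  tree : ∀ q, q ≠ q0 → q ≠ passS → q ≠ failS →
    ∃! p : Qt × Option Lab, T p.1 p.2 q
  pass_loops : ∀ ℓ ∈ I, T passS (some ℓ) passS
  pass_terminal : ∀ a q', T passS a q' → q' = passS ∧ ∃ ℓ ∈ I, a = some ℓ
  fail_loops : ∀ ℓ ∈ I, T failS (some ℓ) failS
  fail_terminal : ∀ a q', T failS a q' → q' = failS ∧ ∃ ℓ ∈ I, a = some ℓ
  one_output : ∀ q ℓ ℓ' q' q'', ℓ ∈ U → ℓ' ∈ U →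
    T q (some ℓ) q' → T q (some ℓ') q'' → ℓ = ℓ' ∧ q' = q''
  receptive : ∀ q, ∀ ℓ ∈ I, ℓ ≠ theta → ∃ q', T q (some ℓ) q'

/-- Test execution `t ⫿ i` of a test case `t` with an implementation `i`. -/
def testExec {Qt Qi Lab : Type} (t : TestCase Qt Lab) (i : LTS Qi Lab) :
    LTS (Qt × Qi) Lab where
  I := ∅
  U := i.U ∪ (t.toLTS.L \ {t.theta})
  T := fun p a p' =>
    match a with
    | none => i.T p.2 none p'.2 ∧ p'.1 = p.1
    | some ℓ =>
        (ℓ ∈ i.L ∧ ℓ ∉ t.toLTS.L ∧ i.T p.2 (some ℓ) p'.2 ∧ p'.1 = p.1) ∨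
        (ℓ ∈ t.toLTS.L ∧ ℓ ∉ i.L ∧ ℓ ≠ t.theta ∧ t.T p.1 (some ℓ) p'.1 ∧ p'.2 = p.2) ∨
        (ℓ ∈ i.L ∧ ℓ ∈ t.toLTS.L ∧ t.T p.1 (some ℓ) p'.1 ∧ i.T p.2 (some ℓ) p'.2) ∨
        (ℓ = t.theta ∧ t.T p.1 (some ℓ) p'.1 ∧ p'.2 = p.2 ∧ i.Quiescent p.2)
  q0 := (t.q0, i.q0)

theorem W_nil_iff {Q Lab : Type} (M : LTS Q Lab) (q q' : Q) : M.W q [] q' ↔ M.Eps q q' := by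
  constructor
  · intro h
    generalize hσ : ([] : List (ELabel Lab)) = σ at h
    cases h with
    | nil h => exact h
    | snoc h1 h2 h3 => simp at hσ
  · exact LTS.W.nil

theorem W_snoc_iff {Q Lab : Type} (M : LTS Q Lab) (q q' : Q) (σ : List (ELabel Lab))
    (x : ELabel Lab) :
    M.W q (σ ++ [x]) q' ↔ ∃ q1 q2, M.W q σ q1 ∧ M.VStep q1 x q2 ∧ M.Eps q2 q' := by
  constructor
  · intro h
    generalize hσ : σ ++ [x] = ρ at h
    cases h with
    | nil h => simp at hσ
    | @snoc q1 q2 _ ρ y h1 h2 h3 =>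
      obtain ⟨rfl, hy⟩ := List.append_inj' hσ rfl
      simp only [List.cons.injEq, and_true] at hy
      subst hy
      exact ⟨q1, q2, h1, h2, h3⟩
  · rintro ⟨q1, q2, h1, h2, h3⟩
    exact LTS.W.snoc h1 h2 h3

theorem W_eps {Q Lab : Type} (M : LTS Q Lab) {q q1 q' : Q} {σ : List (ELabel Lab)}
    (h : M.W q σ q1) (h' : M.Eps q1 q') : M.W q σ q' := by
  cases h with
  | nil h => exact LTS.W.nil (Relation.ReflTransGen.trans h h')
  | snoc h1 h2 h3 => exact LTS.W.snoc h1 h2 (Relation.ReflTransGen.trans h3 h')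

theorem par_eps_iff {Qs Qe Lab : Type} (s : LTS Qs Lab) (e : LTS Qe Lab) (p p' : Qs × Qe) :
    (par s e).Eps p p' ↔ s.Eps p.1 p'.1 ∧ e.Eps p.2 p'.2 := by
  constructor
  · intro h
    induction h with
    | refl => exact ⟨Relation.ReflTransGen.refl, Relation.ReflTransGen.refl⟩
    | tail _ h ih =>
      rcases h with ⟨h, h2⟩ | ⟨h, h2⟩
      · exact ⟨ih.1.tail h, h2 ▸ ih.2⟩
      · exact ⟨h2 ▸ ih.1, ih.2.tail h⟩
  · obtain ⟨a, b⟩ := p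
    obtain ⟨a', b'⟩ := p'
    rintro ⟨h1, h2⟩
    have A : (par s e).Eps (a, b) (a', b) :=
      Relation.ReflTransGen.lift (fun x => (x, b)) (fun x y h => Or.inl ⟨h, rfl⟩) _ _ h1
    have B : (par s e).Eps (a', b) (a', b') :=
      Relation.ReflTransGen.lift (fun x => (a', x)) (fun x y h => Or.inr ⟨h, rfl⟩) _ _ h2
    exact Relation.ReflTransGen.trans A B

theorem enabled_of_no_tau {Q Lab : Type} (M : LTS Q Lab) (hM : M.InputEnabled) (q : Q)
    (hq : ∀ q', ¬ M.T q none q') (l : Lab) (hl : l ∈ M.I) : ∃ q', M.T q (some l) q' := by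
  obtain ⟨q', h⟩ := hM q l hl
  obtain ⟨q1, q2, h1, h2, -⟩ := (W_snoc_iff M q q' [] _).1 h
  rw [W_nil_iff] at h1
  rcases Relation.ReflTransGen.cases_head h1 with rfl | ⟨c, hc, -⟩
  · exact ⟨q2, h2⟩
  · exact absurd hc (hq c)

theorem par_quiescent_iff {Qs Qe Lab : Type} (s : LTS Qs Lab) (e : LTS Qe Lab)
    (hs : s.InputEnabled) (he : e.InputEnabled) (hc : Composable s e) (p : Qs × Qe) :
    (par s e).Quiescent p ↔ s.Quiescent p.1 ∧ e.Quiescent p.2 := by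
  have hdis : ∀ x, x ∈ s.U → x ∈ e.U → False := fun x h1 h2 => by
    have : x ∈ s.U ∩ e.U := ⟨h1, h2⟩
    rw [hc] at this
    exact this
  constructor
  · rintro ⟨h1, h2⟩
    have ts : ∀ q', ¬ s.T p.1 none q' := fun q' h => h2 (q', p.2) (Or.inl ⟨h, rfl⟩)
    have te : ∀ q', ¬ e.T p.2 none q' := fun q' h => h2 (p.1, q') (Or.inr ⟨h, rfl⟩)
    refine ⟨⟨fun x hx q' h => ?_, ts⟩, ⟨fun x hx q' h => ?_, te⟩⟩
    · by_cases hxe : x ∈ e.L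
      · obtain ⟨r, hr⟩ := enabled_of_no_tau e he p.2 te x
          (hxe.resolve_right (fun h => hdis x hx h))
        exact h1 x (Or.inl hx) (q', r) (Or.inr (Or.inr ⟨Or.inr hx, hxe, h, hr⟩))
      · exact h1 x (Or.inl hx) (q', p.2) (Or.inl ⟨Or.inr hx, hxe, h, rfl⟩)
    · by_cases hxs : x ∈ s.L
      · obtain ⟨r, hr⟩ := enabled_of_no_tau s hs p.1 ts x
          (hxs.resolve_right (fun h => hdis x h hx))
        exact h1 x (Or.inr hx) (r, q') (Or.inr (Or.inr ⟨hxs, Or.inr hx, hr, h⟩))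
      · exact h1 x (Or.inr hx) (p.1, q') (Or.inr (Or.inl ⟨Or.inr hx, hxs, h, rfl⟩))
  · rintro ⟨⟨s1, s2⟩, ⟨e1, e2⟩⟩
    refine ⟨fun x hx q' h => ?_, fun q' h => ?_⟩
    · rcases hx with hx | hx
      · rcases h with ⟨_, _, h, _⟩ | ⟨_, hn, _⟩ | ⟨_, _, h, _⟩
        · exact s1 x hx _ h
        · exact hn (Or.inr hx)
        · exact s1 x hx _ h
      · rcases h with ⟨_, hn, _⟩ | ⟨_, _, h, _⟩ | ⟨_, _, _, h⟩
        · exact hn (Or.inr hx)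
        · exact e1 x hx _ h
        · exact e1 x hx _ h
    · rcases h with ⟨h, _⟩ | ⟨h, _⟩
      · exact s2 _ h
      · exact e2 _ h

theorem projD_snoc_pos {Lab : Type} (σ : List (ELabel Lab)) (Ls : Set Lab) (x : ELabel Lab)
    (h : ELabel.inL Ls x) : projD (σ ++ [x]) Ls = projD σ Ls ++ [x] := by
  simp [projD, List.filter_append, h]

theorem projD_snoc_neg {Lab : Type} (σ : List (ELabel Lab)) (Ls : Set Lab) (x : ELabel Lab)
    (h : ¬ ELabel.inL Ls x) : projD (σ ++ [x]) Ls = projD σ Ls := by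
  simp [projD, List.filter_append, h]

theorem par_L_sub {Qs Qe Lab : Type} (s : LTS Qs Lab) (e : LTS Qe Lab) (l : Lab)
    (h : l ∈ (par s e).L) : l ∈ s.L ∨ l ∈ e.L := by
  rcases h with (h | h) | (h | h)
  · exact Or.inl (Or.inl h.1)
  · exact Or.inr (Or.inl h.1)
  · exact Or.inl (Or.inr h)
  · exact Or.inr (Or.inr h)

/-- for composable input-enabled `i_s`, `i_e` and
`σ ∈ (L_{i_s∥i_e}^δ)*`:  `i_s ∥ i_e ==σ==> q_s' ∥ q_e'` iff
`i_s ==σ↾L_{i_s}^δ==> q_s'` and `i_e ==σ↾L_{i_e}^δ==> q_e'`. -/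
theorem project_from_parcomp_IOTS {Qis Qie Lab : Type}
    (iS : LTS Qis Lab) (iE : LTS Qie Lab)
    (hiS : iS.WellFormed) (hiE : iE.WellFormed)
    (hiSenabled : iS.InputEnabled) (hiEenabled : iE.InputEnabled)
    (hcomp : Composable iS iE)
    (σ : List (ELabel Lab)) (hσ : TraceIn (par iS iE).L σ)
    (qs' : Qis) (qe' : Qie) :
    (par iS iE).W (par iS iE).q0 σ (qs', qe') ↔
      iS.W iS.q0 (projD σ iS.L) qs' ∧ iE.W iE.q0 (projD σ iE.L) qe' := by
  induction σ using List.reverseRecOn generalizing qs' qe' with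
  | nil =>
    simp only [projD, List.filter_nil, W_nil_iff, par_eps_iff]
    rfl
  | append_singleton σ x ih =>
    have ih := ih (fun y hy => hσ y (List.mem_append_left _ hy))
    have hx := hσ x (by simp)
    rw [W_snoc_iff]
    cases x with
    | delta =>
      rw [projD_snoc_pos _ iS.L .delta trivial, projD_snoc_pos _ iE.L .delta trivial, W_snoc_iff, W_snoc_iff]
      constructor
      · rintro ⟨⟨a, b⟩, q2, h1, ⟨rfl, h2⟩, h3⟩
        rw [par_quiescent_iff iS iE hiSenabled hiEenabled hcomp] at h2
        rw [par_eps_iff] at h3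
        rw [ih] at h1
        exact ⟨⟨a, a, h1.1, ⟨rfl, h2.1⟩, h3.1⟩, ⟨b, b, h1.2, ⟨rfl, h2.2⟩, h3.2⟩⟩
      · rintro ⟨⟨a, _, h1, ⟨rfl, h2⟩, h3⟩, ⟨b, _, k1, ⟨rfl, k2⟩, k3⟩⟩
        refine ⟨_, _, (ih _ _).2 ⟨h1, k1⟩, ⟨rfl, ?_⟩, (par_eps_iff _ _ _ _).2 ⟨h3, k3⟩⟩
        exact (par_quiescent_iff iS iE hiSenabled hiEenabled hcomp _).2 ⟨h2, k2⟩
    | lab l =>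
      by_cases hs : l ∈ iS.L
      · by_cases he : l ∈ iE.L
        · rw [projD_snoc_pos _ iS.L (.lab l) hs, projD_snoc_pos _ iE.L (.lab l) he, W_snoc_iff, W_snoc_iff]
          constructor
          · rintro ⟨⟨a, b⟩, ⟨c, d⟩, h1, h2, h3⟩
            rw [par_eps_iff] at h3
            rw [ih] at h1
            rcases h2 with ⟨_, hn, _⟩ | ⟨_, hn, _⟩ | ⟨_, _, h2, k2⟩
            · exact absurd he hn
            · exact absurd hs hn
            · exact ⟨⟨a, c, h1.1, h2, h3.1⟩, ⟨b, d, h1.2, k2, h3.2⟩⟩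
          · rintro ⟨⟨a, c, h1, h2, h3⟩, ⟨b, d, k1, k2, k3⟩⟩
            exact ⟨(a, b), (c, d), (ih _ _).2 ⟨h1, k1⟩,
              Or.inr (Or.inr ⟨hs, he, h2, k2⟩), (par_eps_iff _ _ _ _).2 ⟨h3, k3⟩⟩
        · rw [projD_snoc_pos _ iS.L (.lab l) hs, projD_snoc_neg _ iE.L (.lab l) he, W_snoc_iff]
          constructor
          · rintro ⟨⟨a, b⟩, ⟨c, d⟩, h1, h2, h3⟩
            rw [par_eps_iff] at h3
            rw [ih] at h1
            rcases h2 with ⟨_, _, h2, k2⟩ | ⟨hn, _⟩ | ⟨_, hn, _⟩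
            · have k2 : d = b := k2
              subst k2
              exact ⟨⟨a, c, h1.1, h2, h3.1⟩, W_eps _ h1.2 h3.2⟩
            · exact absurd hn he
            · exact absurd hn he
          · rintro ⟨⟨a, c, h1, h2, h3⟩, k1⟩
            exact ⟨(a, qe'), (c, qe'), (ih _ _).2 ⟨h1, k1⟩,
              Or.inl ⟨hs, he, h2, rfl⟩,
              (par_eps_iff _ _ _ _).2 ⟨h3, Relation.ReflTransGen.refl⟩⟩
      · have he : l ∈ iE.L := (par_L_sub iS iE l hx).resolve_left hs
        rw [projD_snoc_neg _ iS.L (.lab l) hs, projD_snoc_pos _ iE.L (.lab l) he, W_snoc_iff]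
        constructor
        · rintro ⟨⟨a, b⟩, ⟨c, d⟩, h1, h2, h3⟩
          rw [par_eps_iff] at h3
          rw [ih] at h1
          rcases h2 with ⟨hn, _⟩ | ⟨_, _, h2, k2⟩ | ⟨hn, _⟩
          · exact absurd hn hs
          · have k2 : c = a := k2
            subst k2
            exact ⟨W_eps _ h1.1 h3.1, ⟨b, d, h1.2, h2, h3.2⟩⟩
          · exact absurd hn hs
        · rintro ⟨h1, ⟨b, d, k1, k2, k3⟩⟩
          exact ⟨(qs', b), (qs', d), (ih _ _).2 ⟨h1, k1⟩,
            Or.inr (Or.inl ⟨he, hs, k2, rfl⟩),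
            (par_eps_iff _ _ _ _).2 ⟨Relation.ReflTransGen.refl, k3⟩⟩
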